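/- For the sequence (a_k) from Example 1, there exist constants c₁, c₂ > 0 such that c₁ ln a_k ≤ a_{k+1} - a_k ≤ c₂ ln a_k for all sufficiently large k. -/

import Mathlib

/-- Every increment with `k` in the dyadic block `[2 ^ p, 2 ^ (p + 1))` equals `2 * p`. -/
theorem increment_eq_two_mul_log (a : ℕ → ℕ) (h2 : a 2 = 3) (h3 : a 3 = 5)
    (hmid : ∀ p k : ℕ, 1 ≤ p → 2 ^ p < k → k < 2 ^ (p + 1) →
      a (k + 1) = a k + 2 * p)
    (hpow : ∀ p : ℕ, 2 ≤ p →
      a (2 ^ p + 1) = a (2 ^ p) + (a (2 ^ p) - a (2 ^ p - 1)) + 2)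
    (k : ℕ) (hk : 2 ≤ k) : a (k + 1) = a k + 2 * Nat.log 2 k := by
  have hlt : k < 2 ^ (Nat.log 2 k + 1) := Nat.lt_pow_succ_log_self (by norm_num) k
  have hle : 2 ^ Nat.log 2 k ≤ k := Nat.pow_log_le_self 2 (by omega)
  have hp : 1 ≤ Nat.log 2 k := Nat.log_pos (by norm_num) hk
  generalize Nat.log 2 k = p at *
  rcases hle.lt_or_eq with h | rfl
  · exact hmid p k hp h hlt
  · obtain ⟨q, rfl⟩ : ∃ q, p = q + 1 := ⟨p - 1, by omega⟩
    rcases Nat.eq_zero_or_pos q with rfl | hq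
    · simp [h2, h3]
    · have hpow_q : 2 ≤ 2 ^ q := Nat.le_self_pow (by omega) 2
      have hsucc : 2 ^ (q + 1) = 2 * 2 ^ q := by ring
      have hprev := hmid q (2 ^ (q + 1) - 1) hq (by omega) (by omega)
      rw [Nat.sub_add_cancel (by omega)] at hprev
      have hcur := hpow (q + 1) (by omega)
      omega

/-- A sequence with increments `2 * Nat.log 2 k` starting from `a 2 = 3` lies between
`k` and `k ^ 2`. -/
theorem le_and_le_sq_of_increment (a : ℕ → ℕ) (h2 : a 2 = 3)
    (hinc : ∀ k, 2 ≤ k → a (k + 1) = a k + 2 * Nat.log 2 k) (k : ℕ) (hk : 2 ≤ k) :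
    k ≤ a k ∧ a k ≤ k ^ 2 := by
  induction k, hk using Nat.le_induction with
  | base => simp [h2]
  | succ k hk ih =>
    have hp : 1 ≤ Nat.log 2 k := Nat.log_pos (by norm_num) hk
    have hlog : Nat.log 2 k ≤ k := Nat.log_le_self 2 k
    rw [hinc k hk]
    constructor <;> nlinarith


/-- For the sequence of Example 1 there are constants `c₁, c₂ > 0` with
`c₁ ln a_k ≤ a_{k+1} - a_k ≤ c₂ ln a_k` for all sufficiently large `k`. -/
theorem stmt9 (a : ℕ → ℕ)
    (h1 : a 1 = 1) (h2 : a 2 = 3) (h3 : a 3 = 5)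
    (hmid : ∀ p k : ℕ, 1 ≤ p → 2 ^ p < k → k < 2 ^ (p + 1) →
      a (k + 1) = a k + 2 * p)
    (hpow : ∀ p : ℕ, 2 ≤ p →
      a (2 ^ p + 1) = a (2 ^ p) + (a (2 ^ p) - a (2 ^ p - 1)) + 2) :
    ∃ c₁ c₂ : ℝ, 0 < c₁ ∧ 0 < c₂ ∧ ∃ N : ℕ, ∀ k ≥ N,
      c₁ * Real.log (a k) ≤ (a (k + 1) : ℝ) - (a k : ℝ) ∧
      (a (k + 1) : ℝ) - (a k : ℝ) ≤ c₂ * Real.log (a k) := by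
  have hinc := increment_eq_two_mul_log a h2 h3 hmid hpow
  refine ⟨1 / 2, 4, by norm_num, by norm_num, 2, fun k hk => ?_⟩
  obtain ⟨hlow, hupp⟩ := le_and_le_sq_of_increment a h2 hinc k hk
  have hlt : k < 2 ^ (Nat.log 2 k + 1) := Nat.lt_pow_succ_log_self (by norm_num) k
  have hle : 2 ^ Nat.log 2 k ≤ k := Nat.pow_log_le_self 2 (by omega)
  have hp : 1 ≤ Nat.log 2 k := Nat.log_pos (by norm_num) hk
  rw [hinc k hk]
  generalize Nat.log 2 k = p at *
  have hp' : (1 : ℝ) ≤ p := by exact_mod_cast hp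
  have hak : (0 : ℝ) < a k := by exact_mod_cast (by omega : 0 < a k)
  have hlogLow : p * Real.log 2 ≤ Real.log (a k) := by
    rw [← Real.log_pow]
    exact Real.log_le_log (by positivity) (by exact_mod_cast hle.trans hlow)
  have hlogUpp : Real.log (a k) ≤ 2 * ((p + 1) * Real.log 2) := by
    have h : (a k : ℝ) ≤ (2 ^ (p + 1)) ^ 2 := by
      exact_mod_cast hupp.trans (Nat.pow_le_pow_left hlt.le 2)
    have := Real.log_le_log hak h
    rw [Real.log_pow, Real.log_pow] at this
    exact_mod_cast this
  have hlogTwoLow := Real.log_two_gt_d9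
  have hlogTwoUpp := Real.log_two_lt_d9
  push_cast
  constructor <;> nlinarith
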